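/- For every infinite cardinal Γ: (a) m₀(Γ) has the cf(Γ)⁺-SVM property, i.e. there is a finite constant v working for all set algebras of cardinality at most cf(Γ); and (b) m₀(Γ) does not have the Γ⁺⁺-SVM property, i.e. there is no finite constant v working for all set algebras of cardinality at most Γ⁺. In particular, if Γ is a regular cardinal, the SVM character of m₀(Γ) equals Γ⁺⁺. -/

import Mathlib

/-!
Part (a) rests on a relative form of the Kalton–Roberts theorem: a real-valued 1-additive `ν` on a
set algebra `F` that is bounded by `1` on a subalgebra `G` is within `235` of a measure vanishing
on `G`. For an `m₀(Γ)`-valued `ν` on an algebra `F` with at most `cf Γ` elements, write `F` as the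
union of a chain of subalgebras `H` with fewer than `cf Γ` elements. Off a set `S H ⊆ Γ` of size
`< #Γ` all coordinates of `ν` are bounded by `1` on `H`. Apply the relative theorem at each
coordinate `γ`, with `G` the union of those `H` for which `γ ∉ S H`. The resulting measure at
`A ∈ H` is nonzero only at coordinates in the small set `S H`, so it lies in `m₀(Γ)`.

The Kalton–Roberts theorem itself is proved with concentrators: bipartite graphs with `4m` inputs
and `3m` outputs of bounded degree, in which each set of at most `2m` inputs can be matched into
the outputs. They show that the average of a 1-additive `f` with `|f| ≤ M` and `f univ = 0` with
respect to probability weights that cover every point equally is at most `3M/4 + 27` in absolute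
value. Hahn–Banach duality then gives a measure within `3M/4 + 29` of `f`, and iteration removes
the dependence on `M`, since `117` exceeds the fixed point `116` of `M ↦ 3M/4 + 29`. The relative
form for finite algebras follows by subtracting the values of the measure on unions of `G`-atoms
through chosen representatives, and the general case by an ultrafilter limit.

For part (b), take `Γ⁺` subsets `N a` of `Γ`, each of size `#Γ`, with pairwise intersections of
size `< #Γ`. On finite `A ⊆ Γ⁺` put `ν A γ = max (#{a ∈ A | γ ∈ N a} - 1) 0`, and `ν Aᶜ = -ν A`;
this is 1-additive with values in `m₀(Γ)` on the finite–cofinite algebra. A measure `μ` with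
values in `m₀(Γ)` has, in each `N a`, a coordinate at which `μ {a}` is below `1/2`. One coordinate
`γ` then works for infinitely many `a`, and for `n` of these the distance between `ν` and `μ` at
`γ` is at least `n/2 - 1`.
-/

open Cardinal ENNReal

/-- A set algebra: contains `∅`, closed under complements and finite unions. -/
def IsSetAlg {Ω : Type*} (F : Set (Set Ω)) : Prop :=
  ∅ ∈ F ∧ (∀ A ∈ F, Aᶜ ∈ F) ∧ ∀ A ∈ F, ∀ B ∈ F, A ∪ B ∈ F

/-- `ν` is 1-additive on the set algebra `F`. -/
def OneAdd {Ω X : Type*} [SeminormedAddCommGroup X] (F : Set (Set Ω)) (ν : Set Ω → X) : Prop :=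
  ∀ A ∈ F, ∀ B ∈ F, Disjoint A B → ‖ν (A ∪ B) - ν A - ν B‖ ≤ 1

/-- `μ` is a (finitely additive) vector measure on the set algebra `F`. -/
def VectMeas {Ω X : Type*} [AddCommGroup X] (F : Set (Set Ω)) (μ : Set Ω → X) : Prop :=
  ∀ A ∈ F, ∀ B ∈ F, Disjoint A B → μ (A ∪ B) = μ A + μ B

/-- `K` is a Kalton–Roberts constant. -/
def IsKRConst (K : ℝ) : Prop :=
  ∀ (Ω : Type) (F : Set (Set Ω)), IsSetAlg F →
    ∀ ν : Set Ω → ℝ, OneAdd F ν →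
      ∃ μ : Set Ω → ℝ, VectMeas F μ ∧ ∀ A ∈ F, |ν A - μ A| ≤ K

/-- `X` has the SVM property with constant `v` (arbitrary set algebras). -/
def HasSVMBound (X : Type*) [SeminormedAddCommGroup X] (v : ℝ) : Prop :=
  ∀ (Ω : Type) (F : Set (Set Ω)), IsSetAlg F →
    ∀ ν : Set Ω → X, OneAdd F ν →
      ∃ μ : Set Ω → X, VectMeas F μ ∧ ∀ A ∈ F, ‖ν A - μ A‖ ≤ v

/-- `X` has the ω-SVM property with constant `v` (finite set algebras). -/
def HasOmegaSVMBound (X : Type*) [SeminormedAddCommGroup X] (v : ℝ) : Prop :=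
  ∀ (Ω : Type) (F : Set (Set Ω)), IsSetAlg F → F.Finite →
    ∀ ν : Set Ω → X, OneAdd F ν →
      ∃ μ : Set Ω → X, VectMeas F μ ∧ ∀ A ∈ F, ‖ν A - μ A‖ ≤ v

/-- `X` has the κ-SVM property with constant `v` (set algebras of cardinality `< κ`). -/
def HasKappaSVMBound (X : Type*) [SeminormedAddCommGroup X] (κ : Cardinal) (v : ℝ) : Prop :=
  ∀ (Ω : Type) (F : Set (Set Ω)), IsSetAlg F → #(↥F) < κ →
    ∀ ν : Set Ω → X, OneAdd F ν →
      ∃ μ : Set Ω → X, VectMeas F μ ∧ ∀ A ∈ F, ‖ν A - μ A‖ ≤ v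


/-- The subspace m₀(Γ) of ℓ∞(Γ): functions x such that for every ε > 0 the set
of coordinates with |x γ| ≥ ε has cardinality less than #Γ. -/
noncomputable def mZero (Γ : Type) : Submodule ℝ ↥(lp (fun _ : Γ => ℝ) ⊤) :=
  Submodule.span ℝ {x | ∀ ε : ℝ, 0 < ε → #(↥{γ : Γ | ε ≤ |x γ|}) < #Γ}

section Concentrators

variable {α β κ : Type*} [Fintype κ]

/-- A concentrator: the bipartite multigraph whose input `i` is joined to the outputs `g i c`,
`c : κ`, satisfies Hall's condition for all sets of at most `k` inputs. -/
def IsConcentrator [DecidableEq β] (k : ℕ) (g : α → κ → β) : Prop :=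
  ∀ S : Finset α, S.card ≤ k → S.card ≤ (S.biUnion fun i => Finset.univ.image (g i)).card

theorem IsConcentrator.exists_injOn [DecidableEq β] [Nonempty κ] {k : ℕ} {g : α → κ → β}
    (hg : IsConcentrator k g) {S : Finset α} (hS : S.card ≤ k) :
    ∃ c : α → κ, Set.InjOn (fun i => g i (c i)) S := by
  classical
  have hall : ∀ s : Finset S, s.card ≤ (s.biUnion fun i => Finset.univ.image (g i)).card := by
    intro s
    have hs : (s.map (Function.Embedding.subtype _)).card ≤ k :=
      (Finset.card_le_card (Finset.map_subtype_subset s)).trans hS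
    have := hg _ hs
    rwa [Finset.card_map, Finset.map_eq_image, Finset.image_biUnion] at this
  obtain ⟨h, h_inj, h_mem⟩ :=
    (Finset.all_card_le_biUnion_card_iff_exists_injective
      fun i : S => Finset.univ.image (g i)).1 hall
  have hc : ∀ i, ∃ c, ∀ hi : i ∈ S, g i c = h ⟨i, hi⟩ := by
    intro i
    by_cases hi : i ∈ S
    · obtain ⟨c, -, hc⟩ := Finset.mem_image.1 (h_mem ⟨i, hi⟩)
      exact ⟨c, fun _ => hc⟩
    · exact ⟨Classical.arbitrary κ, fun hi' => absurd hi' hi⟩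
  choose c hc using hc
  refine ⟨c, fun i hi j hj hij => ?_⟩
  simp only [hc i hi, hc j hj] at hij
  exact congrArg Subtype.val (h_inj hij)

theorem dens_piFinset {ι : Type*} [Fintype ι] [DecidableEq ι] {X : ι → Type*}
    [∀ i, Fintype (X i)] (s : ∀ i, Finset (X i)) :
    (Fintype.piFinset s).dens = ∏ i, (s i).dens := by
  simp only [Finset.dens, Fintype.card_piFinset, Fintype.card_pi, Nat.cast_prod,
    Finset.prod_div_distrib]

variable [Fintype α] [Fintype β]

/-- The graphs all of whose edges at the inputs in `S` end in `T`. -/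
def edgesInto [DecidableEq α] [DecidableEq κ] (S : Finset α) (T : Finset β) : Finset (α → κ → β) :=
  Fintype.piFinset fun i => if i ∈ S then Fintype.piFinset fun _ => T else Finset.univ

theorem mem_edgesInto [DecidableEq α] [DecidableEq κ] {S : Finset α} {T : Finset β}
    {g : α → κ → β} :
    g ∈ edgesInto S T ↔ ∀ i ∈ S, ∀ c, g i c ∈ T := by
  simp only [edgesInto, Fintype.mem_piFinset]
  refine forall_congr' fun i => ?_
  by_cases hi : i ∈ S <;> simp [hi]

theorem dens_edgesInto [DecidableEq α] [DecidableEq κ] [Nonempty β]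
    (S : Finset α) (T : Finset β) :
    (edgesInto S T : Finset (α → κ → β)).dens = T.dens ^ (Fintype.card κ * S.card) := by
  simp only [edgesInto, dens_piFinset, apply_ite Finset.dens, Finset.prod_const,
    Finset.card_univ, Finset.dens_univ, Finset.prod_ite_mem, Finset.univ_inter, pow_mul]

theorem exists_mem_edgesInto_of_not_isConcentrator [DecidableEq α] [DecidableEq β]
    [DecidableEq κ] {n : ℕ} (hn : n ≤ Fintype.card β)
    {g : α → κ → β} (hg : ¬ IsConcentrator n g) :
    ∃ k ∈ Finset.Icc 1 n, ∃ S ∈ Finset.powersetCard k Finset.univ,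
      ∃ T ∈ Finset.powersetCard k Finset.univ, g ∈ edgesInto S T := by
  simp only [IsConcentrator, not_forall, not_le] at hg
  obtain ⟨S, hSn, hlt⟩ := hg
  obtain ⟨T, hT, hTS⟩ := Finset.exists_superset_card_eq hlt.le (hSn.trans hn)
  refine ⟨S.card, Finset.mem_Icc.2 ⟨Nat.one_le_of_lt hlt, hSn⟩,
    S, Finset.mem_powersetCard_univ.2 rfl, T, Finset.mem_powersetCard_univ.2 hTS,
    mem_edgesInto.2 fun i hi c => hT ?_⟩
  exact Finset.mem_biUnion.2 ⟨i, hi, Finset.mem_image_of_mem _ (Finset.mem_univ c)⟩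

/-- The probabilistic method: the sum bounds the probability that a random graph is not a
concentrator. -/
theorem exists_isConcentrator_of_sum_lt_one [DecidableEq β] [Nonempty β] {n : ℕ}
    (hn : n ≤ Fintype.card β)
    (h : ∑ k ∈ Finset.Icc 1 n, ((Fintype.card α).choose k * (Fintype.card β).choose k : ℝ) *
      (k / Fintype.card β) ^ (Fintype.card κ * k) < 1) :
    ∃ g : α → κ → β, IsConcentrator n g := by
  classical
  by_contra! hcon
  let bad (k : ℕ) : Finset (α → κ → β) :=
    (Finset.powersetCard k Finset.univ).biUnion fun S =>
      (Finset.powersetCard k Finset.univ).biUnion fun T => edgesInto S T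
  have dens_bad (k : ℕ) : (bad k).dens ≤ (Fintype.card α).choose k *
      ((Fintype.card β).choose k * (k / Fintype.card β : ℚ≥0) ^ (Fintype.card κ * k)) := by
    rw [← Finset.card_univ (α := α), ← Finset.card_univ (α := β), ← Finset.card_powersetCard k,
      ← Finset.card_powersetCard k, ← nsmul_eq_mul, ← nsmul_eq_mul]
    refine Finset.dens_biUnion_le.trans (Finset.sum_le_card_nsmul _ _ _ fun S hS => ?_)
    refine Finset.dens_biUnion_le.trans (Finset.sum_le_card_nsmul _ _ _ fun T hT => ?_)
    rw [dens_edgesInto, Finset.dens_eq_card_div_card, Finset.mem_powersetCard_univ.1 hS,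
      Finset.mem_powersetCard_univ.1 hT, Finset.card_univ]
  have covered : (Finset.univ : Finset (α → κ → β)) ⊆ (Finset.Icc 1 n).biUnion bad := by
    intro g _
    obtain ⟨k, hk, S, hS, T, hT, hg⟩ := exists_mem_edgesInto_of_not_isConcentrator hn (hcon g)
    simp only [bad, Finset.mem_biUnion]
    exact ⟨k, hk, S, hS, T, hT, hg⟩
  have union_bound : (1 : ℚ≥0) ≤ ∑ k ∈ Finset.Icc 1 n, ((Fintype.card α).choose k *
      ((Fintype.card β).choose k * (k / Fintype.card β : ℚ≥0) ^ (Fintype.card κ * k))) := by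
    rw [← Finset.dens_univ (α := α → κ → β)]
    exact (Finset.dens_le_dens covered).trans
      (Finset.dens_biUnion_le.trans (Finset.sum_le_sum fun k _ => dens_bad k))
  refine h.not_ge ?_
  have := (NNRat.cast_le (K := ℝ)).2 union_bound
  push_cast at this
  simpa only [mul_assoc] using this

/-- The `k`-th term of the union bound; `k ^ k / k! ≤ e ^ k` and `(4 / 3) * (2 / 3) ^ 10 * e ^ 2`
is less than `1 / 4`. -/
theorem choose_mul_choose_mul_pow_le {a m k : ℕ} (ha : a ≤ 4 * m) (hm : 0 < m)
    (hkm : k ≤ 2 * m) :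
    (a.choose k * (3 * m).choose k : ℝ) * (k / (3 * m)) ^ (12 * k) ≤ (1 / 4) ^ k := by
  have : (0 : ℝ) < m := by exact_mod_cast hm
  have choose_a : (a.choose k : ℝ) ≤ (4 * m : ℝ) ^ k / k.factorial := by
    refine (Nat.choose_le_pow_div k a).trans ?_
    gcongr
    exact_mod_cast ha
  have choose_3m : ((3 * m).choose k : ℝ) ≤ (3 * m : ℝ) ^ k / k.factorial := by
    simpa using Nat.choose_le_pow_div (α := ℝ) k (3 * m)
  have pow_div_factorial : (k : ℝ) ^ k / k.factorial ≤ Real.exp 1 ^ k := by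
    simpa [← Real.exp_nat_mul] using Real.pow_div_factorial_le_exp (k : ℝ) k.cast_nonneg k
  have ratio : (k : ℝ) / (3 * m) ≤ 2 / 3 := by
    rw [div_le_div_iff₀ (by positivity) (by norm_num)]
    have : (k : ℝ) ≤ 2 * m := by exact_mod_cast hkm
    linarith
  have exp_sq : Real.exp 1 ^ 2 ≤ 2.72 ^ 2 := by
    gcongr
    linarith [Real.exp_one_lt_d9]
  calc (a.choose k * (3 * m).choose k : ℝ) * (k / (3 * m)) ^ (12 * k)
      ≤ ((4 * m : ℝ) ^ k / k.factorial * ((3 * m : ℝ) ^ k / k.factorial)) *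
          (k / (3 * m)) ^ (12 * k) := by gcongr
    _ = (4 / 3 * ((k : ℝ) / (3 * m)) ^ 10) ^ k * ((k : ℝ) ^ k / k.factorial) ^ 2 := by
        rw [show 12 * k = 10 * k + k + k by ring, pow_add, pow_add, pow_mul, mul_pow (4 / 3 : ℝ)]
        generalize ((k : ℝ) / (3 * m)) ^ 10 = y
        simp only [div_pow, mul_pow]
        field_simp
    _ ≤ (4 / 3 * (2 / 3 : ℝ) ^ 10) ^ k * (Real.exp 1 ^ k) ^ 2 := by gcongr
    _ = (4 / 3 * (2 / 3 : ℝ) ^ 10 * Real.exp 1 ^ 2) ^ k := by ring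
    _ ≤ (1 / 4) ^ k := by
        gcongr
        linarith

theorem sum_Icc_one_quarter_pow_lt_one (n : ℕ) : ∑ k ∈ Finset.Icc 1 n, (1 / 4 : ℝ) ^ k < 1 := by
  have geometric : ∑ k ∈ Finset.Icc 1 n, (1 / 4 : ℝ) ^ k = (1 - (1 / 4) ^ n) / 3 := by
    induction n with
    | zero => simp
    | succ n ih =>
      rw [Finset.sum_Icc_succ_top (by omega), ih]
      ring
  have : (0 : ℝ) < (1 / 4) ^ n := by positivity
  linarith

theorem exists_isConcentrator {m : ℕ} (hm : 0 < m) (hα : Fintype.card α ≤ 4 * m) :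
    ∃ g : α → Fin 12 → Fin (3 * m), IsConcentrator (2 * m) g := by
  have : Nonempty (Fin (3 * m)) := ⟨⟨0, by omega⟩⟩
  refine exists_isConcentrator_of_sum_lt_one (by simp; omega)
    ((Finset.sum_le_sum fun k hk => ?_).trans_lt (sum_Icc_one_quarter_pow_lt_one (2 * m)))
  simpa using choose_mul_choose_mul_pow_le hα hm (Finset.mem_Icc.1 hk).2

end Concentrators

section NearlyAdditive

variable {Ω E : Type*} [DecidableEq Ω]

/-- `1`-additivity of a set function on the finite subsets of `Ω`; for finite `Ω` this is
`1`-additivity on the full power set. -/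
def NearlyAdditive [SeminormedAddCommGroup E] (f : Finset Ω → E) : Prop :=
  ∀ A B, Disjoint A B → ‖f (A ∪ B) - f A - f B‖ ≤ 1

namespace NearlyAdditive

section SeminormedAddCommGroup

variable [SeminormedAddCommGroup E] {f : Finset Ω → E}

theorem norm_empty_le (hf : NearlyAdditive f) : ‖f ∅‖ ≤ 1 := by
  simpa using hf ∅ ∅ (Finset.disjoint_empty_left _)

theorem sub_sum (hf : NearlyAdditive f) (w : Ω → E) :
    NearlyAdditive fun A => f A - ∑ ω ∈ A, w ω := by
  intro A B hAB
  convert hf A B hAB using 2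
  simp only [Finset.sum_union hAB]
  abel

theorem norm_add_compl_le [Fintype Ω] (hf : NearlyAdditive f) (huniv : f Finset.univ = 0)
    (A : Finset Ω) : ‖f A + f Aᶜ‖ ≤ 1 := by
  have := hf A Aᶜ disjoint_compl_right
  rwa [Finset.union_compl, huniv, zero_sub, ← neg_add', norm_neg] at this

theorem norm_biUnion_sub_sum_le {ι : Type*} (hf : NearlyAdditive f) (A : ι → Finset Ω)
    (s : Finset ι) (hs : (s : Set ι).PairwiseDisjoint A) :
    ‖f (s.biUnion A) - ∑ i ∈ s, f (A i)‖ ≤ s.card + 1 := by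
  classical
  induction s using Finset.induction_on with
  | empty => simpa using hf.norm_empty_le
  | insert a s ha ih =>
    rw [Finset.coe_insert, Set.pairwiseDisjoint_insert_of_notMem (by simpa using ha)] at hs
    have hdisj : Disjoint (A a) (s.biUnion A) := Finset.disjoint_biUnion_right _ _ _ |>.2 hs.2
    rw [Finset.biUnion_insert, Finset.sum_insert ha, Finset.card_insert_of_notMem ha]
    calc ‖f (A a ∪ s.biUnion A) - (f (A a) + ∑ i ∈ s, f (A i))‖
        = ‖(f (A a ∪ s.biUnion A) - f (A a) - f (s.biUnion A)) +
            (f (s.biUnion A) - ∑ i ∈ s, f (A i))‖ := by congr 1; abel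
      _ ≤ 1 + (s.card + 1) := (norm_add_le _ _).trans (add_le_add (hf _ _ hdisj) (ih hs.1))
      _ = (s.card + 1 : ℕ) + 1 := by push_cast; ring

theorem norm_sub_sum_fiber_le {κ : Type*} [Fintype κ] [DecidableEq κ] (hf : NearlyAdditive f)
    (A : Finset Ω) (c : Ω → κ) :
    ‖f A - ∑ k, f {ω ∈ A | c ω = k}‖ ≤ Fintype.card κ + 1 := by
  have := hf.norm_biUnion_sub_sum_le (fun k => {ω ∈ A | c ω = k}) Finset.univ
    fun k _ l _ hkl => Finset.disjoint_filter.2 fun ω _ hk hl => hkl (hk.symm.trans hl)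
  rwa [Finset.biUnion_filter_eq_of_maps_to fun _ _ => Finset.mem_univ _] at this

/-- Cut each `A i` into parts, one for each edge at the input `i`, and reassemble the parts that
arrive at a common output. At each point `ω`, Hall's theorem matches the inputs `i` with `ω ∈ A i`
to distinct outputs, so the parts arriving at an output can be chosen disjoint. -/
theorem norm_sum_le_of_isConcentrator {ι κ β : Type*} [Fintype ι] [Fintype κ] [Fintype β]
    [DecidableEq β] [Nonempty κ] (hf : NearlyAdditive f) {M : ℝ} (hM : ∀ A, ‖f A‖ ≤ M) {k : ℕ}
    {g : ι → κ → β} (hg : IsConcentrator k g) (A : ι → Finset Ω)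
    (hA : ∀ ω, (Finset.univ.filter fun i => ω ∈ A i).card ≤ k) :
    ‖∑ i, f (A i)‖ ≤
      Fintype.card β * (M + 1) + Fintype.card ι * (2 * Fintype.card κ + 1) := by
  classical
  choose c hc using fun ω => hg.exists_injOn (hA ω)
  let part (p : ι × κ) : Finset Ω := {ω ∈ A p.1 | c ω p.1 = p.2}
  let arriving (j : β) : Finset (ι × κ) := {p | g p.1 p.2 = j}
  have arriving_disjoint (j : β) : (arriving j : Set (ι × κ)).PairwiseDisjoint part := by
    rintro ⟨i, a⟩ hi ⟨i', a'⟩ hi' hne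
    refine Finset.disjoint_left.2 fun ω hω hω' => hne ?_
    simp only [arriving, part, Finset.coe_filter, Finset.mem_univ, true_and, Set.mem_ofPred_eq,
      Finset.mem_filter] at hi hi' hω hω'
    obtain ⟨hωi, rfl⟩ := hω
    obtain ⟨hωi', rfl⟩ := hω'
    obtain rfl : i = i' := hc ω (by simpa using hωi) (by simpa using hωi') (hi.trans hi'.symm)
    rfl
  have split : ‖∑ i, f (A i) - ∑ p, f (part p)‖ ≤ Fintype.card ι * (Fintype.card κ + 1) := by
    rw [Fintype.sum_prod_type, ← Finset.sum_sub_distrib, ← nsmul_eq_mul, ← Finset.card_univ]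
    exact (norm_sum_le _ _).trans
      (Finset.sum_le_card_nsmul _ _ _ fun i _ => hf.norm_sub_sum_fiber_le (A i) (c · i))
  have join (j : β) : ‖∑ p ∈ arriving j, f (part p)‖ ≤ (M + 1) + (arriving j).card := by
    have := norm_le_norm_add_norm_sub (f ((arriving j).biUnion part)) (∑ p ∈ arriving j, f (part p))
    linarith [hM ((arriving j).biUnion part),
      hf.norm_biUnion_sub_sum_le part (arriving j) (arriving_disjoint j)]
  have card_arriving : ∑ j, ((arriving j).card : ℝ) = Fintype.card ι * Fintype.card κ := by
    rw [← Nat.cast_sum, ← Finset.card_eq_sum_card_fiberwise fun _ _ => by simp,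
      Finset.card_univ, Fintype.card_prod, Nat.cast_mul]
  have joined : ‖∑ p, f (part p)‖ ≤
      Fintype.card β * (M + 1) + Fintype.card ι * Fintype.card κ := by
    rw [← Finset.sum_fiberwise Finset.univ (fun p => g p.1 p.2), ← card_arriving,
      ← nsmul_eq_mul, ← Finset.card_univ, ← Finset.sum_const, ← Finset.sum_add_distrib]
    exact (norm_sum_le _ _).trans (Finset.sum_le_sum fun j _ => join j)
  linarith [norm_le_norm_add_norm_sub (∑ p, f (part p)) (∑ i, f (A i)),
    norm_sub_rev (∑ p, f (part p)) (∑ i, f (A i))]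

theorem norm_sum_le {ι : Type*} [Fintype ι] (hf : NearlyAdditive f) {M : ℝ}
    (hM : ∀ A, ‖f A‖ ≤ M) {m : ℕ} (hm : 0 < m) (hι : Fintype.card ι ≤ 4 * m)
    (A : ι → Finset Ω) (hA : ∀ ω, (Finset.univ.filter fun i => ω ∈ A i).card ≤ 2 * m) :
    ‖∑ i, f (A i)‖ ≤ 4 * m * (3 / 4 * M + 26) := by
  obtain ⟨g, hg⟩ := exists_isConcentrator hm hι
  have hι' : (Fintype.card ι : ℝ) ≤ 4 * m := by exact_mod_cast hι
  have := hf.norm_sum_le_of_isConcentrator hM hg A hA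
  simp only [Fintype.card_fin] at this
  push_cast at this
  linarith [(Nat.cast_nonneg m : (0 : ℝ) ≤ m)]

end SeminormedAddCommGroup

end NearlyAdditive

variable [Fintype Ω]

/-- The total weight that `l` gives to the sets containing `ω`. -/
def coverage (l : Finset Ω → ℝ) (ω : Ω) : ℝ :=
  ∑ A with ω ∈ A, l A

theorem coverage_add_coverage_compl (l : Finset Ω → ℝ) (ω : Ω) :
    coverage l ω + coverage (fun A => l Aᶜ) ω = ∑ A, l A := by
  have compl : coverage (fun A => l Aᶜ) ω = ∑ A with ω ∉ A, l A :=
    Finset.sum_nbij' compl compl (by simp) (by simp) (by simp) (by simp) (by simp)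
  rw [compl, coverage, Finset.sum_filter_add_sum_filter_not]

namespace NearlyAdditive

variable [SeminormedAddCommGroup E] {f : Finset Ω → E} {M : ℝ}

theorem norm_sum_nsmul_le (hf : NearlyAdditive f) (hM : ∀ A, ‖f A‖ ≤ M) {m : ℕ} (hm : 0 < m)
    {n : Finset Ω → ℕ} (hn : ∑ A, n A ≤ 4 * m) (hcov : ∀ ω, ∑ A with ω ∈ A, n A ≤ 2 * m) :
    ‖∑ A, n A • f A‖ ≤ 4 * m * (3 / 4 * M + 26) := by
  have card_filter (ω : Ω) : (Finset.univ.filter fun i : Σ A, Fin (n A) => ω ∈ i.1).card =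
      ∑ A with ω ∈ A, n A := by
    rw [Finset.card_filter, Fintype.sum_sigma, Finset.sum_filter]
    refine Finset.sum_congr rfl fun A _ => ?_
    by_cases hω : ω ∈ A <;> simp [hω]
  have := hf.norm_sum_le hM hm (by simpa using hn) (fun i : Σ A, Fin (n A) => i.1)
    fun ω => (card_filter ω).trans_le (hcov ω)
  simpa [Fintype.sum_sigma] using this

variable [NormedSpace ℝ E] {l : Finset Ω → ℝ}

/-- Repeat each `A` about `4 * m * l A` times and let `m` tend to infinity. -/
theorem norm_sum_smul_le (hf : NearlyAdditive f) (hM : ∀ A, ‖f A‖ ≤ M)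
    (hl : l ∈ stdSimplex ℝ (Finset Ω)) (hcov : ∀ ω, coverage l ω ≤ 1 / 2) :
    ‖∑ A, l A • f A‖ ≤ 3 / 4 * M + 26 := by
  let n (m : ℕ) (A : Finset Ω) : ℕ := ⌊l A * (4 * m : ℝ)⌋₊
  have n_le (m : ℕ) (A : Finset Ω) : (n m A : ℝ) ≤ l A * (4 * m) :=
    Nat.floor_le (mul_nonneg (hl.1 A) (by positivity))
  have sum_n_le (m : ℕ) (s : Finset (Finset Ω)) : (∑ A ∈ s, n m A : ℝ) ≤ (∑ A ∈ s, l A) * (4 * m) :=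
    (Finset.sum_le_sum fun A _ => n_le m A).trans_eq (Finset.sum_mul ..).symm
  have approx (m : ℕ) (hm : 0 < m) :
      ‖∑ A, ((n m A : ℝ) / (4 * m)) • f A‖ ≤ 3 / 4 * M + 26 := by
    have hm' : (0 : ℝ) < 4 * m := by positivity
    have total : ∑ A, n m A ≤ 4 * m := by
      have := sum_n_le m Finset.univ
      rw [hl.2, one_mul] at this
      exact_mod_cast this
    have covered (ω : Ω) : ∑ A with ω ∈ A, n m A ≤ 2 * m := by
      have : (∑ A with ω ∈ A, n m A : ℝ) ≤ 2 * m := (sum_n_le m _).trans <|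
        (mul_le_mul_of_nonneg_right (hcov ω) hm'.le).trans_eq (by ring)
      exact_mod_cast this
    have scale : ∑ A, ((n m A : ℝ) / (4 * m)) • f A = (4 * m : ℝ)⁻¹ • ∑ A, n m A • f A := by
      simp only [div_eq_inv_mul, mul_smul, Finset.smul_sum, Nat.cast_smul_eq_nsmul]
    rw [scale, norm_smul, norm_inv, Real.norm_of_nonneg hm'.le, inv_mul_le_iff₀ hm']
    exact hf.norm_sum_nsmul_le hM hm total covered
  have limit : Filter.Tendsto (fun m : ℕ => ‖∑ A, ((n m A : ℝ) / (4 * m)) • f A‖)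
      Filter.atTop (nhds ‖∑ A, l A • f A‖) := by
    refine (tendsto_finsetSum _ fun A _ => Filter.Tendsto.smul_const ?_ _).norm
    exact (tendsto_nat_floor_mul_div_atTop (hl.1 A)).comp
      (tendsto_natCast_atTop_atTop.const_mul_atTop (by norm_num : (0 : ℝ) < 4))
  refine le_of_tendsto limit ?_
  filter_upwards [Filter.eventually_gt_atTop 0] with m hm using approx m hm

theorem norm_sum_smul_add_sum_compl_smul_le (hf : NearlyAdditive f) (huniv : f Finset.univ = 0)
    (hl : l ∈ stdSimplex ℝ (Finset Ω)) :
    ‖∑ A, l A • f A + ∑ A, l Aᶜ • f A‖ ≤ 1 := by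
  have reindex : ∑ A, l Aᶜ • f A = ∑ A, l A • f Aᶜ :=
    Fintype.sum_equiv (compl_involutive.toPerm) _ _ fun A => by simp
  rw [reindex, ← Finset.sum_add_distrib, ← hl.2]
  refine norm_sum_le_of_le _ fun A _ => ?_
  rw [← smul_add, norm_smul, Real.norm_of_nonneg (hl.1 A)]
  exact mul_le_of_le_one_right (hl.1 A) (hf.norm_add_compl_le huniv A)

theorem norm_sum_smul_le_of_coverage_eq (hf : NearlyAdditive f) (huniv : f Finset.univ = 0)
    (hM : ∀ A, ‖f A‖ ≤ M) (hl : l ∈ stdSimplex ℝ (Finset Ω)) {t : ℝ}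
    (hcov : ∀ ω, coverage l ω = t) : ‖∑ A, l A • f A‖ ≤ 3 / 4 * M + 27 := by
  rcases le_total t (1 / 2) with ht | ht
  · linarith [hf.norm_sum_smul_le hM hl fun ω => (hcov ω).trans_le ht]
  · have hl' : (fun A => l Aᶜ) ∈ stdSimplex ℝ (Finset Ω) :=
      ⟨fun A => hl.1 _, (Equiv.sum_comp (compl_involutive.toPerm) l).trans hl.2⟩
    have hcov' (ω : Ω) : coverage (fun A => l Aᶜ) ω ≤ 1 / 2 := by
      linarith [coverage_add_coverage_compl l ω, hcov ω, hl.2]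
    have := norm_le_add_norm_add (∑ A, l A • f A) (∑ A, l Aᶜ • f A)
    linarith [hf.norm_sum_smul_le hM hl' hcov', hf.norm_sum_smul_add_sum_compl_smul_le huniv hl]

end NearlyAdditive

end NearlyAdditive

section Duality

section LocallyConvex

variable {V : Type*} [AddCommGroup V] [Module ℝ V]

theorem eq_zero_of_forall_mem_lt {W : Submodule ℝ V} {φ : V →ₗ[ℝ] ℝ} {b : ℝ}
    (hb : ∀ x ∈ W, b < φ x) {x : V} (hx : x ∈ W) : φ x = 0 := by
  by_contra hne
  have := hb ((b / φ x) • x) (W.smul_mem _ hx)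
  rw [map_smul, smul_eq_mul, div_mul_cancel₀ _ hne] at this
  exact this.false

variable {ι : Type*} [Fintype ι] [TopologicalSpace V] [IsTopologicalAddGroup V]
  [ContinuousSMul ℝ V] [LocallyConvexSpace ℝ V] {W : Submodule ℝ V} {v : ι → V} {f : ι → ℝ}

/-- Separate the convex hull of the points `(v i, f i)` from `W × (-∞, 0]` in `V × ℝ`. -/
theorem exists_strongDual_add_mul_lt_zero (hW : IsClosed (W : Set V))
    (hpos : ∀ l ∈ stdSimplex ℝ ι, ∑ i, l i • v i ∈ W → 0 < ∑ i, l i * f i) :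
    ∃ (φ : StrongDual ℝ V) (c : ℝ), (∀ x ∈ W, φ x = 0) ∧ ∀ i, φ (v i) + f i * c < 0 := by
  classical
  let L := Fintype.linearCombination ℝ fun i => (v i, f i)
  have L_apply (l : ι → ℝ) : L l = (∑ i, l i • v i, ∑ i, l i * f i) := by
    ext <;> simp [L, Fintype.linearCombination_apply, Prod.fst_sum, Prod.snd_sum]
  have disjoint : Disjoint (L '' stdSimplex ℝ ι) ((W : Set V) ×ˢ Set.Iic 0) := by
    rw [Set.disjoint_left]
    rintro _ ⟨l, hl, rfl⟩ hz
    rw [L_apply, Set.mem_prod] at hz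
    exact (hpos l hl hz.1).not_ge hz.2
  obtain ⟨ψ, a, b, hψa, hab, hbψ⟩ := geometric_hahn_banach_compact_closed
    ((convex_stdSimplex ℝ ι).linear_image L)
    ((isCompact_stdSimplex ℝ ι).image L.continuous_of_finiteDimensional)
    (W.convex.prod (convex_Iic 0)) (hW.prod isClosed_Iic) disjoint
  let φ : StrongDual ℝ V := ψ.comp (.inl ℝ V ℝ)
  have ψ_apply (x : V) (y : ℝ) : ψ (x, y) = φ x + y * ψ (0, 1) := by
    have : (x, y) = (x, 0) + y • ((0, 1) : V × ℝ) := by simp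
    rw [this, map_add, map_smul]
    rfl
  have b_lt (x : V) (hx : x ∈ W) : b < φ x := hbψ (x, 0) ⟨hx, Set.mem_Iic.2 le_rfl⟩
  have b_neg : b < 0 := by simpa using b_lt 0 W.zero_mem
  refine ⟨φ, ψ (0, 1), fun x => eq_zero_of_forall_mem_lt (φ := φ.toLinearMap) b_lt, fun i => ?_⟩
  have := hψa _ ⟨Pi.single i 1, single_mem_stdSimplex ℝ i, rfl⟩
  rw [Fintype.linearCombination_apply_single, one_smul, ψ_apply] at this
  linarith

theorem exists_strongDual_le_of_forall_stdSimplex (hW : IsClosed (W : Set V)) {i₀ : ι}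
    (hi₀ : v i₀ ∈ W)
    (hpos : ∀ l ∈ stdSimplex ℝ ι, ∑ i, l i • v i ∈ W → 0 < ∑ i, l i * f i) :
    ∃ φ : StrongDual ℝ V, (∀ x ∈ W, φ x = 0) ∧ ∀ i, φ (v i) ≤ f i := by
  classical
  obtain ⟨φ, c, φ_zero, neg⟩ := exists_strongDual_add_mul_lt_zero hW hpos
  have f_pos : 0 < f i₀ := by
    simpa [Pi.single_apply] using
      hpos _ (single_mem_stdSimplex ℝ i₀) (by simpa [Pi.single_apply] using hi₀)
  have c_neg : c < 0 := by
    have := neg i₀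
    rw [φ_zero _ hi₀, zero_add] at this
    exact neg_of_mul_neg_right this f_pos.le
  refine ⟨(-c)⁻¹ • φ, fun x hx => by simp [φ_zero x hx], fun i => ?_⟩
  change (-c)⁻¹ * φ (v i) ≤ f i
  rw [inv_mul_le_iff₀ (neg_pos.2 c_neg)]
  linarith [neg i]

end LocallyConvex

variable {Ω : Type*} [DecidableEq Ω] [Fintype Ω]

theorem exists_weight_le_of_forall_coverage_eq {f : Finset Ω → ℝ} {K : ℝ}
    (hK : ∀ l ∈ stdSimplex ℝ (Finset Ω), ∀ t, (∀ ω, coverage l ω = t) → -K < ∑ A, l A * f A) :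
    ∃ w : Ω → ℝ, ∑ ω, w ω = 0 ∧ ∀ A, ∑ ω ∈ A, w ω ≤ f A + K := by
  let indicator (A : Finset Ω) (ω : Ω) : ℝ := if ω ∈ A then 1 else 0
  have sum_smul_indicator (l : Finset Ω → ℝ) (ω : Ω) :
      (∑ A, l A • indicator A) ω = coverage l ω := by
    simp [indicator, coverage, Finset.sum_filter]
  obtain ⟨φ, hφ, hle⟩ := exists_strongDual_le_of_forall_stdSimplex
    (W := ℝ ∙ (1 : Ω → ℝ)) (Submodule.closed_of_finiteDimensional _)
    (v := indicator) (f := fun A => f A + K) (i₀ := ∅)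
    (by convert Submodule.zero_mem _; ext; simp [indicator]) (by
      intro l hl hmem
      obtain ⟨t, ht⟩ := Submodule.mem_span_singleton.1 hmem
      have := hK l hl t fun ω => by rw [← sum_smul_indicator, ← ht]; simp
      simp only [mul_add, Finset.sum_add_distrib, ← Finset.sum_mul, hl.2]
      linarith)
  have φ_indicator (A : Finset Ω) : φ (indicator A) = ∑ ω ∈ A, φ (Pi.single ω 1) := by
    rw [← map_sum]
    congr 1
    ext ω
    simp [indicator, Finset.sum_apply, Pi.single_apply]
  refine ⟨fun ω => φ (Pi.single ω 1), ?_, fun A => (φ_indicator A).symm.trans_le (hle A)⟩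
  rw [← φ_indicator]
  convert hφ 1 (Submodule.mem_span_singleton_self 1)
  ext
  simp [indicator]

namespace NearlyAdditive

variable {f : Finset Ω → ℝ}

theorem exists_weight_abs_sub_sum_le (hf : NearlyAdditive f) (huniv : f Finset.univ = 0) {M : ℝ}
    (hM : ∀ A, |f A| ≤ M) :
    ∃ w : Ω → ℝ, ∑ ω, w ω = 0 ∧ ∀ A, |f A - ∑ ω ∈ A, w ω| ≤ 3 / 4 * M + 29 := by
  obtain ⟨w, hw0, hw⟩ := exists_weight_le_of_forall_coverage_eq (f := f) (K := 3 / 4 * M + 28) <| by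
    intro l hl t ht
    have := neg_le_of_abs_le (hf.norm_sum_smul_le_of_coverage_eq huniv hM hl ht)
    simp only [smul_eq_mul] at this
    linarith
  refine ⟨w, hw0, fun A => ?_⟩
  have := abs_le.1 (hf.norm_add_compl_le huniv A)
  have := Finset.sum_add_sum_compl A w
  rw [abs_le]
  constructor <;> linarith [hw A, hw Aᶜ]

theorem exists_weight_of_abs_le (n : ℕ) :
    ∀ f : Finset Ω → ℝ, NearlyAdditive f → f Finset.univ = 0 → (∀ A, |f A| ≤ 117 + n / 4) →
      ∃ w : Ω → ℝ, ∀ A, |f A - ∑ ω ∈ A, w ω| ≤ 117 := by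
  induction n with
  | zero => exact fun f _ _ hM => ⟨0, by simpa using hM⟩
  | succ n ih =>
    intro f hf huniv hM
    obtain ⟨w, hw0, hw⟩ := hf.exists_weight_abs_sub_sum_le huniv hM
    obtain ⟨w', hw'⟩ := ih _ (hf.sub_sum w) (by rw [hw0, huniv, sub_zero]) fun A =>
      (hw A).trans (by push_cast; linarith [n.cast_nonneg (α := ℝ)])
    exact ⟨w + w', fun A => by simpa [Finset.sum_add_distrib, sub_sub] using hw' A⟩

/-- The Kalton–Roberts theorem for finite power sets. -/
theorem exists_weight {Ω : Type*} [DecidableEq Ω] [Finite Ω] {f : Finset Ω → ℝ}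
    (hf : NearlyAdditive f) : ∃ w : Ω → ℝ, ∀ A, |f A - ∑ ω ∈ A, w ω| ≤ 117 := by
  cases nonempty_fintype Ω
  rcases isEmpty_or_nonempty Ω with hΩ | ⟨⟨p⟩⟩
  · refine ⟨0, fun A => ?_⟩
    rw [Finset.eq_empty_of_isEmpty A, Finset.sum_empty, sub_zero]
    exact hf.norm_empty_le.trans (by norm_num)
  -- Subtracting the point mass `f univ` at `p` makes the value at `univ` vanish.
  let w₀ : Ω → ℝ := Pi.single p (f Finset.univ)
  obtain ⟨M, hM⟩ := (Set.finite_range fun A => |f A - ∑ ω ∈ A, w₀ ω|).bddAbove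
  obtain ⟨n, hn⟩ := exists_nat_ge (4 * M)
  obtain ⟨w, hw⟩ := exists_weight_of_abs_le n _ (hf.sub_sum w₀) (by simp [w₀]) fun A =>
    (hM ⟨A, rfl⟩).trans (by linarith)
  exact ⟨w₀ + w, fun A => by simpa [Finset.sum_add_distrib, sub_sub] using hw A⟩

end NearlyAdditive

end Duality

section SetAlgebras

open MeasureTheory (IsSetAlgebra generateSetAlgebra isSetAlgebra_generateSetAlgebra
  self_subset_generateSetAlgebra generateSetAlgebra_mono mem_generateSetAlgebra_elim)

variable {Ω : Type*} {F : Set (Set Ω)}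

theorem isSetAlg_iff_isSetAlgebra : IsSetAlg F ↔ IsSetAlgebra F :=
  ⟨fun ⟨empty, compl, union⟩ => ⟨empty, fun A => compl A, fun A B hA => union A hA B⟩,
    fun h => ⟨h.empty_mem, fun _ hA => h.compl_mem hA, fun _ hA _ hB => h.union_mem hA hB⟩⟩

theorem isSetAlg_generateSetAlgebra (I : Set (Set Ω)) : IsSetAlg (generateSetAlgebra I) :=
  isSetAlg_iff_isSetAlgebra.2 isSetAlgebra_generateSetAlgebra

theorem IsSetAlg.generateSetAlgebra_subset (hF : IsSetAlg F) {I : Set (Set Ω)} (hI : I ⊆ F) :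
    generateSetAlgebra I ⊆ F :=
  IsSetAlgebra.generateSetAlgebra_subset hI (isSetAlg_iff_isSetAlgebra.1 hF)

theorem IsSetAlg.inter {G : Set (Set Ω)} (hF : IsSetAlg F) (hG : IsSetAlg G) :
    IsSetAlg (F ∩ G) :=
  ⟨⟨hF.1, hG.1⟩, fun A hA => ⟨hF.2.1 A hA.1, hG.2.1 A hA.2⟩,
    fun A hA B hB => ⟨hF.2.2 A hA.1 B hB.1, hG.2.2 A hA.2 B hB.2⟩⟩

theorem IsSetAlg.sUnion_of_isChain {𝒞 : Set (Set (Set Ω))} (h𝒞 : ∀ H ∈ 𝒞, IsSetAlg H)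
    (hne : 𝒞.Nonempty) (hchain : IsChain (· ⊆ ·) 𝒞) : IsSetAlg (⋃₀ 𝒞) := by
  refine ⟨?_, ?_, ?_⟩
  · obtain ⟨H, hH⟩ := hne
    exact ⟨H, hH, (h𝒞 H hH).1⟩
  · rintro A ⟨H, hH, hA⟩
    exact ⟨H, hH, (h𝒞 H hH).2.1 A hA⟩
  · rintro A ⟨H, hH, hA⟩ B ⟨H', hH', hB⟩
    obtain ⟨K, hK, hHK, hH'K⟩ := hchain.directedOn H hH H' hH'
    exact ⟨K, hK, (h𝒞 K hK).2.2 A (hHK hA) B (hH'K hB)⟩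

theorem mk_finset_lt {α : Type*} {c : Cardinal} (hc : ℵ₀ ≤ c) (hα : #α < c) :
    #(Finset α) < c := by
  rcases finite_or_infinite α with h | h
  · exact (lt_aleph0_of_finite _).trans_le hc
  · rwa [mk_finset_of_infinite]

theorem mk_setOf_finite_subset_lt {α : Type*} {s : Set α} {c : Cardinal} (hc : ℵ₀ ≤ c)
    (hs : #s < c) : #{t : Set α | t.Finite ∧ t ⊆ s} < c := by
  have : {t : Set α | t.Finite ∧ t ⊆ s} ⊆
      Set.range fun u : Finset s => ((↑) '' (u : Set s) : Set α) := by
    rintro t ⟨ht, hts⟩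
    refine ⟨(ht.preimage Subtype.val_injective.injOn).toFinset, ?_⟩
    simpa using hts
  exact ((mk_le_mk_of_subset this).trans mk_range_le).trans_lt (mk_finset_lt hc hs)

theorem mk_generateSetAlgebra_lt {I : Set (Set Ω)} {c : Cardinal} (hc : ℵ₀ ≤ c) (hI : #I < c) :
    #(generateSetAlgebra I) < c := by
  let J : Set (Set Ω) := I ∪ compl '' I
  have hJ : #J < c :=
    (mk_union_le _ _).trans_lt (add_lt_of_lt hc hI (mk_image_le.trans_lt hI))
  have normal_form : generateSetAlgebra I ⊆ (fun T : Set (Set (Set Ω)) => ⋃ a ∈ T, ⋂ t ∈ a, t) ''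
      {T | T.Finite ∧ T ⊆ {a | a.Finite ∧ a ⊆ J}} := by
    intro A hA
    obtain ⟨T, hT, hTfin, hTI, rfl⟩ := mem_generateSetAlgebra_elim hA
    exact ⟨T, ⟨hT, fun a ha => ⟨hTfin a ha, fun t ht =>
      (hTI a ha t ht).imp_right fun h => ⟨tᶜ, h, compl_compl t⟩⟩⟩, rfl⟩
  exact ((mk_le_mk_of_subset normal_form).trans mk_image_le).trans_lt
    (mk_setOf_finite_subset_lt hc (mk_setOf_finite_subset_lt hc hJ))

theorem finite_generateSetAlgebra {I : Set (Set Ω)} (hI : I.Finite) :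
    (generateSetAlgebra I).Finite :=
  lt_aleph0_iff_set_finite.1 (mk_generateSetAlgebra_lt le_rfl (lt_aleph0_iff_set_finite.2 hI))

theorem IsSetAlg.mem_of_saturated (hF : IsSetAlg F) (hfin : F.Finite) {A : Set Ω}
    (hA : ∀ ω ∈ A, ∀ ω', (∀ B ∈ F, ω ∈ B ↔ ω' ∈ B) → ω' ∈ A) : A ∈ F := by
  have hF' := isSetAlg_iff_isSetAlgebra.1 hF
  let atom (ω : Ω) : Set Ω := ⋂ B ∈ {B ∈ F | ω ∈ B}, B
  have atom_mem (ω : Ω) : atom ω ∈ F := by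
    have := hF'.biInter_mem (s := id) (hfin.subset (Set.sep_subset F (ω ∈ ·))).toFinset
      fun B hB => ((Set.Finite.mem_toFinset _).1 hB).1
    simpa only [Set.Finite.mem_toFinset, id] using this
  have atom_subset (ω : Ω) (hω : ω ∈ A) : atom ω ⊆ A := by
    intro ω' hω'
    refine hA ω hω ω' fun B hB => ⟨fun h => Set.mem_iInter₂.1 hω' B ⟨hB, h⟩, fun h => ?_⟩
    by_contra hωB
    exact Set.mem_iInter₂.1 hω' Bᶜ ⟨hF.2.1 B hB, hωB⟩ h
  have atoms_finite : (atom '' A).Finite :=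
    hfin.subset (Set.image_subset_iff.2 fun ω _ => atom_mem ω)
  have union_atoms : A = ⋃ B ∈ atoms_finite.toFinset, B := by
    simp only [Set.Finite.mem_toFinset, Set.biUnion_image]
    refine Set.Subset.antisymm (fun ω hω => ?_) (Set.iUnion₂_subset atom_subset)
    exact Set.mem_biUnion hω (Set.mem_iInter₂.2 fun B hB => hB.2)
  rw [union_atoms]
  refine hF'.biUnion_mem _ fun B hB => ?_
  obtain ⟨ω, -, rfl⟩ := (Set.Finite.mem_toFinset _).1 hB
  exact atom_mem ω

/-- The map `ρ` sends each point to a representative of its `F`-atom. -/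
theorem IsSetAlg.exists_retraction (hF : IsSetAlg F) (hfin : F.Finite) :
    ∃ ρ : Ω → Ω, (Set.range ρ).Finite ∧ (∀ A, ρ ⁻¹' A ∈ F) ∧ ∀ A ∈ F, ρ ⁻¹' A = A := by
  have := hfin.to_subtype
  let type (ω : Ω) (B : F) : Prop := ω ∈ B.1
  let ρ (ω : Ω) : Ω := Set.rangeSplitting type (Set.rangeFactorization type ω)
  have type_ρ (ω : Ω) : type (ρ ω) = type ω := Set.apply_rangeSplitting type _
  refine ⟨ρ, (Set.finite_range (Set.rangeSplitting type)).subset ?_, fun A => ?_, fun A hA => ?_⟩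
  · exact Set.range_subset_iff.2 fun ω => ⟨_, rfl⟩
  · refine hF.mem_of_saturated hfin fun ω hω ω' h => ?_
    have : type ω = type ω' := funext fun B => propext (h B.1 B.2)
    have : ρ ω = ρ ω' := congrArg (Set.rangeSplitting type) (Subtype.ext this)
    rwa [Set.mem_preimage, ← this]
  · ext ω
    exact iff_of_eq (congrFun (type_ρ ω) ⟨A, hA⟩)

theorem IsSetAlg.exists_chain (hF : IsSetAlg F) {c : Cardinal} (hc : ℵ₀ ≤ c) (hFc : #F ≤ c) :
    ∃ 𝒞 : Set (Set (Set Ω)), IsChain (· ⊆ ·) 𝒞 ∧ (∀ H ∈ 𝒞, IsSetAlg H ∧ H ⊆ F ∧ #H < c) ∧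
      F ⊆ ⋃₀ 𝒞 := by
  obtain ⟨e⟩ : Nonempty (F ≃ (#F).ord.ToType) := Cardinal.eq.1 (mk_ord_toType _).symm
  let segment (b : (#F).ord.ToType) : Set (Set Ω) := Subtype.val '' (e ⁻¹' Set.Iic b)
  have segment_mono : Monotone segment := fun b b' hb => Set.image_mono fun A hA => hA.trans hb
  have mk_segment (b) : #(segment b) < c := by
    refine mk_image_le.trans_lt ?_
    rw [mk_preimage_equiv, ← Set.Iio_insert]
    refine mk_insert_le.trans_lt (add_lt_of_lt hc ?_ (one_lt_aleph0.trans_le hc))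
    exact lt_of_lt_of_le (by simpa using mk_Iio_lt b (by simp)) hFc
  refine ⟨Set.range fun b => generateSetAlgebra (segment b), ?_, ?_, ?_⟩
  · exact Monotone.isChain_range fun b b' hb => generateSetAlgebra_mono (segment_mono hb)
  · rintro _ ⟨b, rfl⟩
    exact ⟨isSetAlg_generateSetAlgebra _,
      hF.generateSetAlgebra_subset (Set.image_subset_iff.2 fun A _ => A.2),
      mk_generateSetAlgebra_lt hc (mk_segment b)⟩
  · intro A hA
    exact ⟨_, ⟨e ⟨A, hA⟩, rfl⟩, self_subset_generateSetAlgebra ⟨⟨A, hA⟩, le_refl (e ⟨A, hA⟩), rfl⟩⟩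

end SetAlgebras

section KaltonRoberts

open MeasureTheory (generateSetAlgebra self_subset_generateSetAlgebra)

variable {Ω : Type*} {F : Set (Set Ω)}

theorem OneAdd.mono {X : Type*} [SeminormedAddCommGroup X] {F' : Set (Set Ω)} {ν : Set Ω → X}
    (hν : OneAdd F ν) (hF' : F' ⊆ F) : OneAdd F' ν :=
  fun A hA B hB => hν A (hF' hA) B (hF' hB)

/-- An ultrafilter limit over the finite subalgebras of `F`. -/
theorem exists_vectMeas_of_forall_finite {X : Type*} [NormedAddCommGroup X] [ProperSpace X]
    (hF : IsSetAlg F) {Z : Set (Set Ω)} (hZ : Z ⊆ F) {ν : Set Ω → X} {v : ℝ}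
    (h : ∀ F' ⊆ F, IsSetAlg F' → F'.Finite → ∃ μ : Set Ω → X, VectMeas F' μ ∧
      (∀ A ∈ F', ‖ν A - μ A‖ ≤ v) ∧ ∀ A ∈ Z ∩ F', μ A = 0) :
    ∃ μ : Set Ω → X, VectMeas F μ ∧ (∀ A ∈ F, ‖ν A - μ A‖ ≤ v) ∧ ∀ A ∈ Z, μ A = 0 := by
  let sub (T : Finset F) : Set (Set Ω) := generateSetAlgebra ((↑) '' (T : Set F))
  have sub_subset (T : Finset F) : sub T ⊆ F :=
    hF.generateSetAlgebra_subset (Set.image_subset_iff.2 fun A _ => A.2)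
  choose μ hμ hν hμZ using fun T => h (sub T) (sub_subset T) (isSetAlg_generateSetAlgebra _)
    (finite_generateSetAlgebra (T.finite_toSet.image _))
  let U : Ultrafilter (Finset F) := Ultrafilter.of Filter.atTop
  have eventually_mem (A) (hA : A ∈ F) : ∀ᶠ T in (U : Filter (Finset F)), A ∈ sub T := by
    refine Ultrafilter.of_le _ ?_
    filter_upwards [Filter.eventually_ge_atTop {⟨A, hA⟩}] with T hT
    exact self_subset_generateSetAlgebra ⟨⟨A, hA⟩, hT (Finset.mem_singleton_self _), rfl⟩
  have exists_limit (A) : ∃ x, A ∈ F → x ∈ Metric.closedBall (ν A) v ∧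
      Filter.Tendsto (μ · A) U (nhds x) := by
    by_cases hA : A ∈ F
    · have mem_ball : Metric.closedBall (ν A) v ∈ U.map (μ · A) := by
        rw [Ultrafilter.mem_map]
        filter_upwards [eventually_mem A hA] with T hT
        rw [Set.mem_preimage, mem_closedBall_iff_norm']
        exact hν T A hT
      obtain ⟨x, hx, hlim⟩ := (isCompact_closedBall (ν A) v).ultrafilter_le_nhds' _ mem_ball
      exact ⟨x, fun _ => ⟨hx, hlim⟩⟩
    · exact ⟨0, fun h => absurd h hA⟩
  choose μ' hμ' using exists_limit
  refine ⟨μ', fun A hA B hB hAB => ?_, fun A hA => ?_, fun A hA => ?_⟩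
  · refine tendsto_nhds_unique (hμ' _ (hF.2.2 A hA B hB)).2
      (((hμ' A hA).2.add (hμ' B hB).2).congr' ?_)
    filter_upwards [eventually_mem A hA, eventually_mem B hB] with T hTA hTB
    exact (hμ T A hTA B hTB hAB).symm
  · exact mem_closedBall_iff_norm'.1 (hμ' A hA).1
  · refine tendsto_nhds_unique (hμ' A (hZ hA)).2 (tendsto_const_nhds.congr' ?_)
    filter_upwards [eventually_mem A (hZ hA)] with T hT
    exact (hμZ T A ⟨hA, hT⟩).symm

variable {ν : Set Ω → ℝ}

theorem OneAdd.exists_vectMeas_of_finite (hν : OneAdd F ν) (hF : IsSetAlg F) (hfin : F.Finite) :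
    ∃ μ : Set Ω → ℝ, VectMeas F μ ∧ ∀ A ∈ F, |ν A - μ A| ≤ 117 := by
  classical
  obtain ⟨ρ, ρ_finite, preimage_mem, preimage_eq⟩ := hF.exists_retraction hfin
  have := ρ_finite.fintype
  let union (S : Finset (Set.range ρ)) : Set Ω := ρ ⁻¹' ((↑) '' (S : Set (Set.range ρ)))
  have hf : NearlyAdditive fun S => ν (union S) := by
    intro S T hST
    have : union (S ∪ T) = union S ∪ union T := by
      simp only [union, Finset.coe_union, Set.image_union, Set.preimage_union]
    simp only [this]
    refine hν _ (preimage_mem _) _ (preimage_mem _) (Disjoint.preimage _ ?_)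
    exact (Set.disjoint_image_iff Subtype.val_injective).2 (Finset.disjoint_coe.2 hST)
  obtain ⟨w, hw⟩ := hf.exists_weight
  refine ⟨fun A => ∑ p with p.1 ∈ A, w p, fun A _ B _ hAB => ?_, fun A hA => ?_⟩
  · simp only [Set.mem_union, Finset.filter_or]
    exact Finset.sum_union (Finset.disjoint_filter.2 fun p _ hpA => Set.disjoint_left.1 hAB hpA)
  · have : union {p | p.1 ∈ A} = A := by
      refine Eq.trans ?_ (preimage_eq A hA)
      ext ω
      simp [union]
    simpa only [this] using hw {p | p.1 ∈ A}

/-- Subtract from an approximating measure `μ` its values on unions of `G`-atoms, taken through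
representatives of the atoms. -/
theorem OneAdd.exists_vectMeas_vanishing_of_finite {G : Set (Set Ω)} (hν : OneAdd F ν)
    (hF : IsSetAlg F) (hfin : F.Finite) (hG : IsSetAlg G) (hGF : G ⊆ F)
    (hνG : ∀ A ∈ G, |ν A| ≤ 1) :
    ∃ μ : Set Ω → ℝ, VectMeas F μ ∧ (∀ A ∈ F, |ν A - μ A| ≤ 235) ∧ ∀ A ∈ G, μ A = 0 := by
  obtain ⟨μ, hμ, hνμ⟩ := hν.exists_vectMeas_of_finite hF hfin
  obtain ⟨ρ, -, preimage_mem, preimage_eq⟩ := hG.exists_retraction (hfin.subset hGF)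
  refine ⟨fun A => μ A - μ (ρ ⁻¹' A), fun A hA B hB hAB => ?_, fun A hA => ?_, fun A hA => ?_⟩
  · simp only [Set.preimage_union, hμ A hA B hB hAB,
      hμ _ (hGF (preimage_mem A)) _ (hGF (preimage_mem B)) (hAB.preimage _)]
    ring
  · have := abs_le.1 (hνμ A hA)
    have := abs_le.1 (hνμ _ (hGF (preimage_mem A)))
    have := abs_le.1 (hνG _ (preimage_mem A))
    rw [abs_le]
    constructor <;> linarith
  · simp only [preimage_eq A hA, sub_self]

theorem OneAdd.exists_vectMeas (hν : OneAdd F ν) (hF : IsSetAlg F) :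
    ∃ μ : Set Ω → ℝ, VectMeas F μ ∧ ∀ A ∈ F, |ν A - μ A| ≤ 117 := by
  obtain ⟨μ, hμ, hνμ, -⟩ := exists_vectMeas_of_forall_finite hF (Set.empty_subset F)
    fun F' hF'F hF' hfin => by
      obtain ⟨μ, hμ, hνμ⟩ := (hν.mono hF'F).exists_vectMeas_of_finite hF' hfin
      exact ⟨μ, hμ, hνμ, by simp⟩
  exact ⟨μ, hμ, hνμ⟩

theorem OneAdd.exists_vectMeas_vanishing {G : Set (Set Ω)} (hν : OneAdd F ν) (hF : IsSetAlg F)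
    (hG : IsSetAlg G) (hGF : G ⊆ F) (hνG : ∀ A ∈ G, |ν A| ≤ 1) :
    ∃ μ : Set Ω → ℝ, VectMeas F μ ∧ (∀ A ∈ F, |ν A - μ A| ≤ 235) ∧ ∀ A ∈ G, μ A = 0 :=
  exists_vectMeas_of_forall_finite hF hGF fun _ hF'F hF' hfin =>
    (hν.mono hF'F).exists_vectMeas_vanishing_of_finite hF' hfin (hG.inter hF')
      Set.inter_subset_right fun A hA => hνG A hA.1

theorem OneAdd.exists_vectMeas_vanishing_of_isChain {𝒞 : Set (Set (Set Ω))} (hν : OneAdd F ν)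
    (hF : IsSetAlg F) (hchain : IsChain (· ⊆ ·) 𝒞)
    (h𝒞 : ∀ H ∈ 𝒞, IsSetAlg H ∧ H ⊆ F) (hν𝒞 : ∀ H ∈ 𝒞, ∀ A ∈ H, |ν A| ≤ 1) :
    ∃ μ : Set Ω → ℝ, VectMeas F μ ∧ (∀ A ∈ F, |ν A - μ A| ≤ 235) ∧
      ∀ H ∈ 𝒞, ∀ A ∈ H, μ A = 0 := by
  rcases 𝒞.eq_empty_or_nonempty with rfl | hne
  · obtain ⟨μ, hμ, hνμ⟩ := hν.exists_vectMeas hF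
    exact ⟨μ, hμ, fun A hA => (hνμ A hA).trans (by norm_num), by simp⟩
  · obtain ⟨μ, hμ, hνμ, hμ_zero⟩ := hν.exists_vectMeas_vanishing hF
      (IsSetAlg.sUnion_of_isChain (fun H hH => (h𝒞 H hH).1) hne hchain)
      (Set.sUnion_subset fun H hH => (h𝒞 H hH).2) fun A ⟨H, hH, hA⟩ => hν𝒞 H hH A hA
    exact ⟨μ, hμ, hνμ, fun H hH A hA => hμ_zero A ⟨H, hH, hA⟩⟩

end KaltonRoberts

section MZero

universe u

theorem mk_iUnion_lt_of_lt_cof {Γ ι : Type u} [Infinite Γ] {f : ι → Set Γ}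
    (hι : #ι < (#Γ).ord.cof) (hf : ∀ i, #(f i) < #Γ) : #(⋃ i, f i) < #Γ := by
  refine (mk_iUnion_le f).trans_lt (mul_lt_of_lt (aleph0_le_mk Γ) ?_ (iSup_lt_of_lt_cof_ord hι hf))
  exact hι.trans_le (by simpa using Ordinal.cof_le_card (#Γ).ord)

theorem aleph0_le_cof_ord (Γ : Type u) [Infinite Γ] : ℵ₀ ≤ (#Γ).ord.cof :=
  Ordinal.aleph0_le_cof_iff.2 (Ordinal.one_lt_cof_iff.2 (isSuccLimit_ord (aleph0_le_mk Γ)))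

variable {Γ : Type}

theorem setOf_le_abs_add_subset (x y : lp (fun _ : Γ => ℝ) ⊤) (ε : ℝ) :
    {γ | ε ≤ |(x + y) γ|} ⊆ {γ | ε / 2 ≤ |x γ|} ∪ {γ | ε / 2 ≤ |y γ|} := by
  intro γ (hγ : ε ≤ |x γ + y γ|)
  by_contra! h
  obtain ⟨hx, hy⟩ : |x γ| < ε / 2 ∧ |y γ| < ε / 2 := by simpa using h
  linarith [abs_add_le (x γ) (y γ)]

theorem setOf_le_abs_smul_subset (c : ℝ) (x : lp (fun _ : Γ => ℝ) ⊤) (ε : ℝ) :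
    {γ | ε ≤ |(c • x) γ|} ⊆ {γ | ε / (|c| + 1) ≤ |x γ|} := by
  intro γ (hγ : ε ≤ |c * x γ|)
  rw [Set.mem_ofPred_eq, div_le_iff₀ (by positivity)]
  rw [abs_mul] at hγ
  nlinarith [abs_nonneg (x γ)]

/-- The condition spanning `mZero Γ` already defines a linear subspace. -/
theorem mk_lt_of_mem_mZero [Infinite Γ] {x : lp (fun _ : Γ => ℝ) ⊤} (hx : x ∈ mZero Γ) {ε : ℝ}
    (hε : 0 < ε) : #{γ | ε ≤ |x γ|} < #Γ := by
  induction hx using Submodule.span_induction generalizing ε with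
  | mem _ h => exact h ε hε
  | zero =>
    have : {γ : Γ | ε ≤ |(0 : lp (fun _ : Γ => ℝ) ⊤) γ|} = ∅ := by
      ext γ
      simpa using hε
    rw [this, mk_eq_zero]
    exact (mk_ne_zero Γ).bot_lt
  | add x y _ _ hx hy =>
    exact (mk_le_mk_of_subset (setOf_le_abs_add_subset x y ε)).trans_lt ((mk_union_le _ _).trans_lt
      (add_lt_of_lt (aleph0_le_mk Γ) (hx (half_pos hε)) (hy (half_pos hε))))
  | smul c x _ hx =>
    exact (mk_le_mk_of_subset (setOf_le_abs_smul_subset c x ε)).trans_lt (hx (by positivity))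

theorem exists_mZero_eq {h : Γ → ℝ} {C : ℝ} (hC : ∀ γ, |h γ| ≤ C)
    (h_support : #{γ | h γ ≠ 0} < #Γ) : ∃ x : mZero Γ, ∀ γ, x.1 γ = h γ := by
  have hmem : Memℓp (E := fun _ : Γ => ℝ) h ⊤ := memℓp_infty ⟨C, Set.forall_mem_range.2 hC⟩
  refine ⟨⟨⟨h, hmem⟩, Submodule.subset_span fun ε hε => ?_⟩, fun γ => rfl⟩
  refine (mk_le_mk_of_subset fun γ (hγ : ε ≤ |h γ|) => ?_).trans_lt h_support
  exact abs_pos.1 (hε.trans_le hγ)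

theorem mZero_ext {x y : mZero Γ} (h : ∀ γ, x.1 γ = y.1 γ) : x = y :=
  Subtype.ext (lp.ext (funext h))

theorem abs_apply_le_norm (x : mZero Γ) (γ : Γ) : |x.1 γ| ≤ ‖x‖ :=
  lp.norm_apply_le_norm top_ne_zero x.1 γ

theorem mZero_norm_le_of_forall_abs_le {x : mZero Γ} {C : ℝ} (hC : 0 ≤ C)
    (h : ∀ γ, |x.1 γ| ≤ C) : ‖x‖ ≤ C :=
  lp.norm_le_of_forall_le (f := x.1) hC h

variable {Ω : Type*} {F : Set (Set Ω)} {ν : Set Ω → mZero Γ}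

theorem OneAdd.apply (hν : OneAdd F ν) (γ : Γ) : OneAdd F fun A => (ν A).1 γ :=
  fun A hA B hB hAB => (abs_apply_le_norm (ν (A ∪ B) - ν A - ν B) γ).trans (hν A hA B hB hAB)

theorem exists_mZero_vectMeas_of_coordinates (hF : IsSetAlg F) {v : ℝ} (hv : 0 ≤ v)
    {m : Γ → Set Ω → ℝ} (hm : ∀ γ, VectMeas F (m γ))
    (hνm : ∀ γ, ∀ A ∈ F, |(ν A).1 γ - m γ A| ≤ v) (h_support : ∀ A ∈ F, #{γ | m γ A ≠ 0} < #Γ) :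
    ∃ μ : Set Ω → mZero Γ, VectMeas F μ ∧ ∀ A ∈ F, ‖ν A - μ A‖ ≤ v := by
  have exists_value (A) : ∃ x : mZero Γ, A ∈ F → ∀ γ, x.1 γ = m γ A := by
    by_cases hA : A ∈ F
    · have bound (γ) : |m γ A| ≤ ‖ν A‖ + v := by
        have hν := abs_le.1 (abs_apply_le_norm (ν A) γ)
        have hνm := abs_le.1 (hνm γ A hA)
        exact abs_le.2 ⟨by linarith, by linarith⟩
      obtain ⟨x, hx⟩ := exists_mZero_eq bound (h_support A hA)
      exact ⟨x, fun _ => hx⟩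
    · exact ⟨0, fun h => absurd h hA⟩
  choose μ hμ using exists_value
  refine ⟨μ, fun A hA B hB hAB => mZero_ext fun γ => ?_,
    fun A hA => mZero_norm_le_of_forall_abs_le hv fun γ => ?_⟩
  · change (μ (A ∪ B)).1 γ = (μ A).1 γ + (μ B).1 γ
    rw [hμ _ (hF.2.2 A hA B hB), hμ A hA, hμ B hB, hm γ A hA B hB hAB]
  · change |(ν A).1 γ - (μ A).1 γ| ≤ v
    rw [hμ A hA]
    exact hνm γ A hA

/-- Write the algebra as the union of a chain of subalgebras `H` of size less than `cf Γ`. Outside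
the small set `large H`, the coordinates of `ν` are at most `1` on `H`, so the approximating
coordinate measures can be taken to vanish there; this puts the resulting measure into `m₀(Γ)`. -/
theorem hasKappaSVMBound_mZero_succ_cof (Γ : Type) [Infinite Γ] :
    HasKappaSVMBound (mZero Γ) (Order.succ (#Γ).ord.cof) 235 := by
  intro Ω F hF hFcof ν hν
  have hcof := aleph0_le_cof_ord Γ
  obtain ⟨𝒞, hchain, h𝒞, hF𝒞⟩ := hF.exists_chain hcof (Order.lt_succ_iff.1 hFcof)
  let large (H : Set (Set Ω)) : Set Γ := ⋃ A : H, {γ | 1 ≤ |(ν A).1 γ|}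
  have mk_large_lt (H) (hH : H ∈ 𝒞) : #(large H) < #Γ :=
    mk_iUnion_lt_of_lt_cof (h𝒞 H hH).2.2 fun A => mk_lt_of_mem_mZero (ν A).2 one_pos
  have coordinate (γ) := (hν.apply γ).exists_vectMeas_vanishing_of_isChain hF
    (𝒞 := {H ∈ 𝒞 | γ ∉ large H}) (hchain.mono (Set.sep_subset _ _))
    (fun H hH => ⟨(h𝒞 H hH.1).1, (h𝒞 H hH.1).2.1⟩)
    fun H hH A hA => (not_le.1 fun h => hH.2 (Set.mem_iUnion.2 ⟨⟨A, hA⟩, h⟩)).le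
  choose m hm hνm hm_zero using coordinate
  refine exists_mZero_vectMeas_of_coordinates hF (by norm_num) hm hνm fun A hA => ?_
  obtain ⟨H, hH, hAH⟩ := hF𝒞 hA
  refine (mk_le_mk_of_subset fun γ hγ => ?_).trans_lt (mk_large_lt H hH)
  by_contra hγH
  exact hγ (hm_zero γ H ⟨hH, hγH⟩ A hAH)

end MZero

section AlmostDisjoint

universe u

/-- The value of `ψ` at `x` avoids the values at `x` of those `φ j` whose rank, in a well-order of
type `#Γ`, is at most that of `x`. -/
theorem exists_eventually_different {Γ J : Type u} [Infinite Γ] (hJ : #J ≤ #Γ) (φ : J → Γ → Γ) :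
    ∃ ψ : Γ → Γ, ∀ j, #{x | ψ x = φ j x} < #Γ := by
  obtain ⟨e⟩ : Nonempty (Γ ≃ (#Γ).ord.ToType) := Cardinal.eq.1 (mk_ord_toType _).symm
  obtain ⟨r⟩ : Nonempty (J ↪ (#Γ).ord.ToType) := by
    rwa [← Cardinal.le_def, mk_ord_toType]
  have mk_Iic_lt_mk (b : (#Γ).ord.ToType) : #(Set.Iic b) < #Γ := by
    simpa using mk_Iic_lt b (by simp) (by simp)
  have exists_avoiding (x) : ∃ y, ∀ j, r j ≤ e x → y ≠ φ j x := by
    by_contra! h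
    have surj : (Set.univ : Set Γ) ⊆ (φ · x) '' (r ⁻¹' Set.Iic (e x)) := fun y _ => by
      obtain ⟨j, hj, hy⟩ := h y
      exact ⟨j, hj, hy.symm⟩
    have := (mk_le_mk_of_subset surj).trans <| mk_image_le.trans <|
      mk_preimage_of_injective _ (Set.Iic (e x)) r.injective
    rw [mk_univ] at this
    exact this.not_gt (mk_Iic_lt_mk (e x))
  choose ψ hψ using exists_avoiding
  refine ⟨ψ, fun j => ?_⟩
  have agree_subset : {x | ψ x = φ j x} ⊆ e ⁻¹' Set.Iic (r j) := fun x hx => by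
    by_contra h
    exact hψ x j (not_le.1 h).le hx
  refine (mk_le_mk_of_subset agree_subset).trans_lt ?_
  rw [mk_preimage_equiv]
  exact mk_Iic_lt_mk _

theorem exists_eventually_different_family (Γ : Type u) [Infinite Γ] :
    ∃ φ : (Order.succ #Γ).ord.ToType → Γ → Γ, Pairwise fun a b => #{x | φ a x = φ b x} < #Γ := by
  have exists_next (a : (Order.succ #Γ).ord.ToType) (φ : ∀ b, b < a → Γ → Γ) :
      ∃ ψ : Γ → Γ, ∀ b (hb : b < a), #{x | ψ x = φ b hb x} < #Γ := by
    have mk_Iio_le : #(Set.Iio a) ≤ #Γ := by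
      rw [← Order.lt_succ_iff]
      simpa using mk_Iio_lt a (by simp)
    obtain ⟨ψ, hψ⟩ := exists_eventually_different mk_Iio_le fun b => φ b.1 b.2
    exact ⟨ψ, fun b hb => hψ ⟨b, hb⟩⟩
  choose next h_next using exists_next
  let φ : (Order.succ #Γ).ord.ToType → Γ → Γ := wellFounded_lt.fix next
  have φ_lt (a b) (hb : b < a) : #{x | φ a x = φ b x} < #Γ := by
    have : φ a = next a fun b _ => φ b := wellFounded_lt.fix_eq next a
    rw [this]
    exact h_next a (fun b _ => φ b) b hb
  refine ⟨φ, fun a b hab => ?_⟩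
  rcases lt_or_gt_of_ne hab with h | h
  · simpa only [eq_comm] using φ_lt b a h
  · exact φ_lt a b h

/-- The graphs of eventually different functions, moved along a bijection `Γ × Γ ≃ Γ`. -/
theorem exists_almost_disjoint (Γ : Type u) [Infinite Γ] :
    ∃ N : (Order.succ #Γ).ord.ToType → Set Γ,
      (∀ a, #Γ ≤ #(N a)) ∧ Pairwise fun a b => #(N a ∩ N b : Set Γ) < #Γ := by
  obtain ⟨φ, hφ⟩ := exists_eventually_different_family Γ
  obtain ⟨q⟩ : Nonempty (Γ × Γ ≃ Γ) := Cardinal.eq.1 (by simp)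
  refine ⟨fun a => Set.range fun x => q (x, φ a x), fun a => ?_, fun a b hab => ?_⟩
  · rw [mk_range_eq]
    exact fun x y h => congrArg Prod.fst (q.injective h)
  · have inter_subset : (Set.range fun x => q (x, φ a x)) ∩ (Set.range fun x => q (x, φ b x)) ⊆
        (fun x => q (x, φ a x)) '' {x | φ a x = φ b x} := by
      rintro _ ⟨⟨x, rfl⟩, y, hy⟩
      obtain ⟨rfl, h⟩ := Prod.ext_iff.1 (q.injective hy)
      exact ⟨y, h.symm, rfl⟩
    exact ((mk_le_mk_of_subset inter_subset).trans mk_image_le).trans_lt (hφ hab)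

end AlmostDisjoint

section FiniteCofinite

variable {K : Type*}

/-- The algebra of finite and cofinite subsets of `K`. -/
def finCofin (K : Type*) : Set (Set K) :=
  {A | A.Finite ∨ Aᶜ.Finite}

theorem coe_mem_finCofin (a : Finset K) : (a : Set K) ∈ finCofin K :=
  Or.inl a.finite_toSet

theorem isSetAlg_finCofin : IsSetAlg (finCofin K) := by
  refine ⟨Or.inl Set.finite_empty, ?_, ?_⟩
  · rintro A (hA | hA)
    · exact Or.inr (by rwa [compl_compl])
    · exact Or.inl hA
  · rintro A (hA | hA) B (hB | hB)
    · exact Or.inl (hA.union hB)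
    · exact Or.inr (hB.subset (Set.compl_subset_compl.2 Set.subset_union_right))
    all_goals exact Or.inr (hA.subset (Set.compl_subset_compl.2 Set.subset_union_left))

theorem mk_finCofin_le [Infinite K] : #(finCofin K) ≤ #K := by
  have subset_range : finCofin K ⊆ Set.range
      (Sum.elim (fun a : Finset K => (a : Set K)) fun a : Finset K => (a : Set K)ᶜ) := by
    rintro A (hA | hA)
    · exact ⟨Sum.inl hA.toFinset, by simp⟩
    · exact ⟨Sum.inr hA.toFinset, by simp⟩
  refine (mk_le_mk_of_subset subset_range).trans (mk_range_le.trans ?_)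
  simp

theorem VectMeas.eq_sum_singleton {X : Type*} [AddCommGroup X] {F : Set (Set K)} {μ : Set K → X}
    (hμ : VectMeas F μ) (hF : ∀ a : Finset K, (a : Set K) ∈ F) (a : Finset K) :
    μ a = ∑ i ∈ a, μ {i} := by
  classical
  induction a using Finset.induction_on with
  | empty =>
    have h_empty : ∅ ∈ F := by simpa using hF ∅
    simpa using hμ ∅ h_empty ∅ h_empty (Set.disjoint_empty _)
  | insert i a hi ih =>
    rw [Finset.sum_insert hi, ← ih, Finset.coe_insert, Set.insert_eq]
    exact hμ {i} (by simpa using hF {i}) a (hF a) (by simpa using hi)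

theorem exists_extension_compl_eq_neg {X : Type*} [AddCommGroup X] [Infinite K]
    (f : Finset K → X) :
    ∃ ν : Set K → X, ∀ a : Finset K, ν a = f a ∧ ν (a : Set K)ᶜ = -f a := by
  classical
  refine ⟨fun A => if h : A.Finite then f h.toFinset else
    if h : Aᶜ.Finite then -f h.toFinset else 0, fun a => ⟨by simp, ?_⟩⟩
  have compl_infinite : ¬ ((a : Set K)ᶜ).Finite := a.finite_toSet.infinite_compl
  have compl_compl_finite : ((a : Set K)ᶜᶜ).Finite := by
    rw [compl_compl]
    exact a.finite_toSet
  have toFinset_eq : compl_compl_finite.toFinset = a := by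
    ext
    simp
  simp only [compl_infinite, compl_compl_finite, dite_true, dite_false, toFinset_eq]

theorem NearlyAdditive.exists_oneAdd_finCofin {X : Type*} [SeminormedAddCommGroup X]
    [DecidableEq K] [Infinite K] {f : Finset K → X} (hf : NearlyAdditive f) :
    ∃ ν : Set K → X, OneAdd (finCofin K) ν ∧ ∀ a : Finset K, ν a = f a := by
  obtain ⟨ν, hν⟩ := exists_extension_compl_eq_neg f
  have finite_cofinite (a b : Finset K) (hab : Disjoint (a : Set K) (b : Set K)ᶜ) :
      ‖ν (a ∪ (b : Set K)ᶜ) - ν a - ν (b : Set K)ᶜ‖ ≤ 1 := by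
    have a_subset : a ⊆ b := Finset.coe_subset.1 (Set.disjoint_compl_right_iff_subset.1 hab)
    have union_eq : (a ∪ (b : Set K)ᶜ : Set K) = ((b \ a : Finset K) : Set K)ᶜ := by
      rw [Finset.coe_sdiff, Set.compl_sdiff]
    have := hf (b \ a) a Finset.sdiff_disjoint
    rw [Finset.sdiff_union_of_subset a_subset] at this
    rw [union_eq, (hν _).2, (hν _).2, (hν _).1]
    convert this using 2
    abel
  refine ⟨ν, ?_, fun a => (hν a).1⟩
  rintro A (hA | hA) B (hB | hB) hAB <;> obtain ⟨a, ha⟩ := hA.exists_finset_coe <;>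
    obtain ⟨b, hb⟩ := hB.exists_finset_coe
  · subst ha hb
    rw [← Finset.coe_union, (hν _).1, (hν _).1, (hν _).1]
    exact hf a b (Finset.disjoint_coe.1 hAB)
  · obtain rfl : B = (b : Set K)ᶜ := by rw [hb, compl_compl]
    subst ha
    exact finite_cofinite a b hAB
  · obtain rfl : A = (a : Set K)ᶜ := by rw [ha, compl_compl]
    subst hb
    rw [Set.union_comm, sub_right_comm]
    exact finite_cofinite b a hAB.symm
  · refine absurd (hB.subset ?_) hA.infinite_compl
    rw [compl_compl]
    exact hAB.subset_compl_right

end FiniteCofinite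

section Excess

universe u

variable {K Γ : Type u} {N : K → Set Γ} {A B : Finset K}

open Classical in
/-- The number of `a ∈ A` with `γ ∈ N a`, reduced by one if it is positive; the truncated
subtraction is intended. -/
noncomputable def excess (N : K → Set Γ) (A : Finset K) (γ : Γ) : ℕ :=
  (A.filter (γ ∈ N ·)).card - 1

theorem excess_le_card (γ : Γ) : excess N A γ ≤ A.card := by
  classical
  exact (Nat.sub_le _ _).trans (Finset.card_filter_le _ _)

theorem excess_of_forall_mem {γ : Γ} (h : ∀ a ∈ A, γ ∈ N a) : excess N A γ = A.card - 1 := by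
  classical
  rw [excess, Finset.filter_true_of_mem h]

theorem abs_excess_union_sub_le [DecidableEq K] (hAB : Disjoint A B) (γ : Γ) :
    |(excess N (A ∪ B) γ - excess N A γ - excess N B γ : ℝ)| ≤ 1 := by
  classical
  have card_union : ((A ∪ B).filter (γ ∈ N ·)).card =
      (A.filter (γ ∈ N ·)).card + (B.filter (γ ∈ N ·)).card := by
    rw [Finset.filter_union, Finset.card_union_of_disjoint (Finset.disjoint_filter_filter hAB)]
  have lower : excess N A γ + excess N B γ ≤ excess N (A ∪ B) γ := by
    unfold excess
    grind
  have upper : excess N (A ∪ B) γ ≤ excess N A γ + excess N B γ + 1 := by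
    unfold excess
    grind
  rify at lower upper
  rw [abs_le]
  constructor <;> linarith

theorem mk_support_excess_lt [Infinite Γ] (hN : Pairwise fun a b => #(N a ∩ N b : Set Γ) < #Γ) :
    #{γ | excess N A γ ≠ 0} < #Γ := by
  classical
  have support_subset : {γ | excess N A γ ≠ 0} ⊆ ⋃ p : A.offDiag, N p.1.1 ∩ N p.1.2 := by
    intro γ hγ
    have one_lt_card : 1 < (A.filter (γ ∈ N ·)).card := by
      unfold excess at hγ
      grind
    obtain ⟨a, ha, b, hb, hab⟩ := Finset.one_lt_card.1 one_lt_card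
    rw [Finset.mem_filter] at ha hb
    exact Set.mem_iUnion.2 ⟨⟨(a, b), Finset.mem_offDiag.2 ⟨ha.1, hb.1, hab⟩⟩, ha.2, hb.2⟩
  refine (mk_le_mk_of_subset support_subset).trans_lt (mk_iUnion_lt_of_lt_cof
    ((lt_aleph0_of_finite _).trans_le (aleph0_le_cof_ord Γ)) ?_)
  rintro ⟨⟨a, b⟩, hab⟩
  exact hN (Finset.mem_offDiag.1 hab).2.2

end Excess

section Counterexample

variable {K Γ : Type} [Infinite Γ] {N : K → Set Γ}

theorem exists_nearlyAdditive_eq_excess [DecidableEq K]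
    (hN : Pairwise fun a b => #(N a ∩ N b : Set Γ) < #Γ) :
    ∃ f : Finset K → mZero Γ, NearlyAdditive f ∧ ∀ A γ, (f A).1 γ = excess N A γ := by
  have exists_value (A : Finset K) : ∃ x : mZero Γ, ∀ γ, x.1 γ = excess N A γ := by
    refine exists_mZero_eq (C := A.card) (fun γ => ?_) ?_
    · rw [Nat.abs_cast]
      exact_mod_cast excess_le_card γ
    · simpa only [ne_eq, Nat.cast_eq_zero] using mk_support_excess_lt hN
  choose f hf using exists_value
  refine ⟨f, fun A B hAB => mZero_norm_le_of_forall_abs_le zero_le_one fun γ => ?_, hf⟩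
  change |(f (A ∪ B)).1 γ - (f A).1 γ - (f B).1 γ| ≤ 1
  simpa only [hf] using abs_excess_union_sub_le hAB γ

theorem exists_infinite_setOf_abs_apply_lt (hK : #Γ < #K) (hN : ∀ a, #Γ ≤ #(N a))
    (x : K → mZero Γ) {ε : ℝ} (hε : 0 < ε) :
    ∃ γ, {a | γ ∈ N a ∧ |(x a).1 γ| < ε}.Infinite := by
  have exists_point (a) : ∃ γ ∈ N a, |(x a).1 γ| < ε := by
    by_contra! h
    exact ((hN a).trans (mk_le_mk_of_subset h)).not_gt (mk_lt_of_mem_mZero (x a).2 hε)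
  choose γ hγN hγ using exists_point
  have : Infinite K := infinite_iff.2 ((aleph0_le_mk Γ).trans hK.le)
  obtain ⟨γ₀, hγ₀⟩ := exists_infinite_fiber γ hK
  refine ⟨γ₀, (Set.infinite_coe_iff.1 hγ₀).mono ?_⟩
  rintro a rfl
  exact ⟨hγN a, hγ a⟩

theorem not_hasKappaSVMBound_mZero_succ_succ (Γ : Type) [Infinite Γ] (v : ℝ) :
    ¬ HasKappaSVMBound (mZero Γ) (Order.succ (Order.succ #Γ)) v := by
  classical
  intro hsvm
  obtain ⟨N, hN_large, hN_disjoint⟩ := exists_almost_disjoint Γ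
  set K := (Order.succ #Γ).ord.ToType
  have mk_K : #K = Order.succ #Γ := mk_ord_toType _
  have hK : #Γ < #K := mk_K ▸ Order.lt_succ _
  have : Infinite K := infinite_iff.2 ((aleph0_le_mk Γ).trans hK.le)
  obtain ⟨f, hf, hf_excess⟩ := exists_nearlyAdditive_eq_excess hN_disjoint
  obtain ⟨ν, hν, hνf⟩ := hf.exists_oneAdd_finCofin
  have mk_lt : #(finCofin K) < Order.succ (Order.succ #Γ) :=
    Order.lt_succ_iff.2 (mk_K ▸ mk_finCofin_le)
  obtain ⟨μ, hμ, hνμ⟩ := hsvm K (finCofin K) isSetAlg_finCofin mk_lt ν hν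
  obtain ⟨γ, hγ⟩ :=
    exists_infinite_setOf_abs_apply_lt hK hN_large (fun a => μ {a}) one_half_pos
  -- On `n` of these indices, `ν` takes the value `n - 1` at `γ`, whereas `μ` is at most `n / 2`.
  obtain ⟨n, hn⟩ := exists_nat_gt (2 * (v + 1))
  obtain ⟨A, hA, hAn⟩ := hγ.exists_subset_card_eq n
  have ν_ge : (n - 1 : ℝ) ≤ (ν A).1 γ := by
    rw [hνf, hf_excess, excess_of_forall_mem fun a ha => (hA ha).1, hAn, sub_le_iff_le_add]
    exact_mod_cast Nat.le_add_of_sub_le le_rfl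
  have μ_le : (μ A).1 γ ≤ n * (1 / 2) := by
    rw [hμ.eq_sum_singleton coe_mem_finCofin A, Submodule.coe_sum, lp.coeFn_sum, Finset.sum_apply,
      ← hAn, ← nsmul_eq_mul]
    exact Finset.sum_le_card_nsmul _ _ _ fun a ha => (le_abs_self _).trans (hA ha).2.le
  have dist_le : |(ν A).1 γ - (μ A).1 γ| ≤ v :=
    (abs_apply_le_norm (ν A - μ A) γ).trans (hνμ A (coe_mem_finCofin A))
  linarith [le_abs_self ((ν A).1 γ - (μ A).1 γ)]

end Counterexample

theorem HasKappaSVMBound.mono {X : Type*} [SeminormedAddCommGroup X] {κ κ' : Cardinal} {v : ℝ}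
    (h : HasKappaSVMBound X κ v) (hκ : κ' ≤ κ) : HasKappaSVMBound X κ' v :=
  fun Ω F hF hFκ => h Ω F hF (hFκ.trans_le hκ)

/-- for an infinite Γ, m₀(Γ) has the cf(Γ)⁺-SVM property but
fails the Γ⁺⁺-SVM property; in particular, for regular Γ its SVM character
(the least κ for which the κ-SVM property fails) equals Γ⁺⁺. -/
theorem stmt_14 (Γ : Type) [Infinite Γ] :
    (∃ v : ℝ, HasKappaSVMBound (↥(mZero Γ)) (Order.succ (((#Γ).ord).cof)) v) ∧
    (¬ ∃ v : ℝ, HasKappaSVMBound (↥(mZero Γ)) (Order.succ (Order.succ (#Γ))) v) ∧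
    ((#Γ).IsRegular →
      (∀ κ : Cardinal, κ < Order.succ (Order.succ (#Γ)) →
        ∃ v : ℝ, HasKappaSVMBound (↥(mZero Γ)) κ v) ∧
      ¬ ∃ v : ℝ, HasKappaSVMBound (↥(mZero Γ)) (Order.succ (Order.succ (#Γ))) v) := by
  have fails : ¬ ∃ v : ℝ, HasKappaSVMBound (mZero Γ) (Order.succ (Order.succ #Γ)) v :=
    fun ⟨v, hv⟩ => not_hasKappaSVMBound_mZero_succ_succ Γ v hv
  have holds := hasKappaSVMBound_mZero_succ_cof Γ
  refine ⟨⟨235, holds⟩, fails, fun hΓ => ⟨fun κ hκ => ⟨235, holds.mono ?_⟩, fails⟩⟩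
  rw [hΓ.cof_ord]
  exact Order.lt_succ_iff.1 hκ
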